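/- arXiv:2008.00114 — 3 statements merged into one kernel-verified Lean document; each statement's English description precedes it below -/
import Mathlib

section
/- Assume (M₁), (M₂), (f₁) and (f₂). Then there exists e ∈ C_c^∞(Ω) such that J(e) < 0 and ‖∇e‖_𝓗 > 1. -/
open MeasureTheory
open scoped NNReal RealInnerProductSpace

/-- The `𝓗`-modular: `ϱ_𝓗(w) = ∫_Ω (|w|^p + a(x)|w|^q) dx`. -/
noncomputable def rhoH {N : ℕ} (Ω : Set (EuclideanSpace ℝ (Fin N))) (p q : ℝ)
    (a w : EuclideanSpace ℝ (Fin N) → ℝ) : ℝ :=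
  ∫ x in Ω, (|w x| ^ p + a x * |w x| ^ q)

/-- The Luxemburg norm `‖w‖_𝓗 = inf {λ > 0 : ϱ_𝓗(w/λ) ≤ 1}`. -/
noncomputable def luxH {N : ℕ} (Ω : Set (EuclideanSpace ℝ (Fin N))) (p q : ℝ)
    (a w : EuclideanSpace ℝ (Fin N) → ℝ) : ℝ :=
  sInf {l : ℝ | 0 < l ∧ rhoH Ω p q a (fun x => w x / l) ≤ 1}

/-- `Ω` has Lipschitz boundary: near each boundary point there are a unit direction `v`
and a Lipschitz function `φ`, constant in the direction `v`, such that locally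
`Ω = {y : φ(y) < ⟪y, v⟫}`. -/
def HasLipschitzBoundary {N : ℕ} (Ω : Set (EuclideanSpace ℝ (Fin N))) : Prop :=
  ∀ x ∈ frontier Ω, ∃ r : ℝ, 0 < r ∧ ∃ v : EuclideanSpace ℝ (Fin N), ‖v‖ = 1 ∧
    ∃ (K : ℝ≥0) (φ : EuclideanSpace ℝ (Fin N) → ℝ), LipschitzWith K φ ∧
      (∀ y : EuclideanSpace ℝ (Fin N), ∀ t : ℝ, φ (y + t • v) = φ y) ∧
      ∀ y ∈ Metric.ball x r, (y ∈ Ω ↔ φ y < ⟪y, v⟫)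

/-- `u` belongs to `C_c^∞(Ω)`: `u` is smooth, compactly supported, with support inside `Ω`. -/
def CcInfty {N : ℕ} (Ω : Set (EuclideanSpace ℝ (Fin N)))
    (u : EuclideanSpace ℝ (Fin N) → ℝ) : Prop :=
  ContDiff ℝ (⊤ : ℕ∞) u ∧ HasCompactSupport u ∧ tsupport u ⊆ Ω

/-- If `σ H(t) ≤ t H'(t)` for `t ≥ s₀ > 0`, then `H(t) / t ^ σ` is nondecreasing there. -/
theorem integral_mul_div_rpow_le_integral {h : ℝ → ℝ} (hc : Continuous h) {s₀ σ t : ℝ}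
    (hs₀ : 0 < s₀) (hσ : ∀ t, s₀ ≤ t → σ * (∫ τ in (0:ℝ)..t, h τ) ≤ t * h t) (ht : s₀ ≤ t) :
    (∫ τ in (0:ℝ)..s₀, h τ) * (t / s₀) ^ σ ≤ ∫ τ in (0:ℝ)..t, h τ := by
  have ht0 : 0 < t := hs₀.trans_le ht
  have hder : ∀ s, s₀ ≤ s → HasDerivAt (fun s => (∫ τ in (0:ℝ)..s, h τ) * s ^ (-σ))
      (h s * s ^ (-σ) + (∫ τ in (0:ℝ)..s, h τ) * (-σ * s ^ (-σ - 1))) s := fun s hs =>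
    (intervalIntegral.integral_hasDerivAt_right (hc.intervalIntegrable _ _)
      (hc.stronglyMeasurableAtFilter _ _) hc.continuousAt).mul
      (Real.hasDerivAt_rpow_const (Or.inl (hs₀.trans_le hs).ne'))
  have hmono : MonotoneOn (fun s => (∫ τ in (0:ℝ)..s, h τ) * s ^ (-σ)) (Set.Ici s₀) := by
    refine monotoneOn_of_deriv_nonneg (convex_Ici _)
      (fun s hs => (hder s hs).continuousAt.continuousWithinAt)
      (fun s hs => (hder s (interior_subset hs)).differentiableAt.differentiableWithinAt) ?_
    intro s hs
    have hs' : s₀ ≤ s := interior_subset hs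
    have hs0 : 0 < s := hs₀.trans_le hs'
    rw [(hder s hs').deriv]
    have e : s ^ (-σ) = s * s ^ (-σ - 1) := by
      rw [Real.rpow_sub_one hs0.ne']; field_simp
    rw [e]
    have := mul_nonneg (sub_nonneg.2 (hσ s hs')) (Real.rpow_pos_of_pos hs0 (-σ - 1)).le
    linarith
  have key := hmono (Set.mem_Ici.2 le_rfl) (Set.mem_Ici.2 ht) ht
  simp only [Real.rpow_neg hs₀.le, Real.rpow_neg ht0.le] at key
  have hts := Real.rpow_pos_of_pos ht0 σ
  have hss := Real.rpow_pos_of_pos hs₀ σ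
  rw [Real.div_rpow ht0.le hs₀.le]
  rw [← div_eq_mul_inv, ← div_eq_mul_inv, le_div_iff₀ hts] at key
  calc _ = (∫ τ in (0:ℝ)..s₀, h τ) / s₀ ^ σ * t ^ σ := by ring
    _ ≤ _ := key

/-- The primitive of a Carathéodory function composed with a measurable function is
a.e. strongly measurable. -/
theorem aestronglyMeasurable_integral_of_caratheodory {X : Type*} [MeasurableSpace X]
    {μ : Measure X} {f : X → ℝ → ℝ} (hm : ∀ t, Measurable fun x => f x t)
    (hc : ∀ᵐ x ∂μ, Continuous (f x)) {u : X → ℝ} (hu : Measurable u) :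
    AEStronglyMeasurable (fun x => ∫ τ in (0:ℝ)..(u x), f x τ) μ := by
  classical
  obtain ⟨S, hS, hSm, hSμ⟩ := exists_measurable_superset_of_null (ae_iff.1 hc)
  let g : X → ℝ → ℝ := fun x t => Set.indicator Sᶜ (fun x => f x t) x
  have hgm : ∀ t, Measurable fun x => g x t := fun t => (hm t).indicator hSm.compl
  have hgc : ∀ x, Continuous (g x) := by
    intro x
    by_cases hx : x ∈ S
    · have : g x = fun _ => 0 := by funext t; simp [g, hx]
      rw [this]; exact continuous_const
    · have : g x = f x := by funext t; simp [g, hx]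
      rw [this]
      by_contra h
      exact hx (hS h)
  have hjoint : StronglyMeasurable (Function.uncurry fun (t : ℝ) (x : X) => g x t) :=
    stronglyMeasurable_uncurry_of_continuous_of_stronglyMeasurable (fun x => hgc x)
      fun t => (hgm t).stronglyMeasurable
  have hcomp : StronglyMeasurable (Function.uncurry fun (x : X) (s : ℝ) => g x (s * u x)) :=
    hjoint.comp_measurable (g := fun z : X × ℝ => (z.2 * u z.1, z.1))
      ((measurable_snd.mul (hu.comp measurable_fst)).prodMk measurable_fst)
  have hint : StronglyMeasurable fun x => u x * ∫ s in (0:ℝ)..1, g x (s * u x) := by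
    refine hu.stronglyMeasurable.mul ?_
    simp only [intervalIntegral.integral_of_le zero_le_one]
    exact hcomp.integral_prod_right
  refine ⟨_, hint, ?_⟩
  have hSae : ∀ᵐ x ∂μ, x ∉ S := measure_eq_zero_iff_ae_notMem.1 hSμ
  filter_upwards [hSae] with x hx
  have hgf : g x = f x := by funext t; simp [g, hx]
  rw [hgf, intervalIntegral.mul_integral_comp_mul_right]
  simp

theorem abs_integral_le_of_power_bound {h : ℝ → ℝ} {A B α β T t : ℝ} (hA : 0 ≤ A) (hB : 0 ≤ B)
    (hα : 0 ≤ α) (hβ : 0 ≤ β) (hh : ∀ t, |h t| ≤ A * |t| ^ α + B * |t| ^ β) (ht : |t| ≤ T) :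
    |∫ τ in (0:ℝ)..t, h τ| ≤ (A * T ^ α + B * T ^ β) * T := by
  have hT : 0 ≤ T := (abs_nonneg t).trans ht
  have hb : ∀ τ ∈ Set.uIoc 0 t, ‖h τ‖ ≤ A * T ^ α + B * T ^ β := by
    intro τ hτ
    have hτt : |τ| ≤ T := by
      refine le_trans ?_ ht
      simpa using Set.abs_sub_left_of_mem_uIcc (Set.uIoc_subset_uIcc hτ)
    refine (hh τ).trans ?_
    gcongr
  have := intervalIntegral.norm_integral_le_of_norm_le_const hb
  rw [sub_zero, Real.norm_eq_abs] at this
  refine this.trans ?_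
  gcongr

/-- Under `t M(t) ≤ θ 𝓜(t)`, the primitive `𝓜` grows at most like `t ^ θ`. -/
theorem integral_le_integral_one_mul_rpow {M : ℝ → ℝ} (hMc : ContinuousOn M (Set.Ici 0))
    (hM0 : ∀ t, 0 ≤ t → 0 ≤ M t) {θ : ℝ}
    (hM1 : ∀ t, 0 ≤ t → t * M t ≤ θ * ∫ τ in (0:ℝ)..t, M τ) {s S : ℝ} (hs : 0 ≤ s)
    (hsS : s ≤ S) (hS : 1 ≤ S) :
    ∫ τ in (0:ℝ)..s, M τ ≤ (∫ τ in (0:ℝ)..1, M τ) * S ^ θ := by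
  let h : ℝ → ℝ := fun t => M (max t 0)
  have hc : Continuous h := hMc.comp_continuous (by fun_prop) fun t => le_max_right t 0
  have hh : ∀ t, 0 ≤ t → ∫ τ in (0:ℝ)..t, M τ = ∫ τ in (0:ℝ)..t, h τ := by
    intro t ht
    refine intervalIntegral.integral_congr fun τ hτ => ?_
    rw [Set.uIcc_of_le ht] at hτ
    simp [h, hτ.1]
  have hS0 : (0:ℝ) ≤ S := zero_le_one.trans hS
  have h0 : ∀ t, 0 ≤ h t := fun t => hM0 _ (le_max_right t 0)
  rw [hh s hs, hh 1 zero_le_one]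
  have h1 : ∫ τ in (0:ℝ)..s, h τ ≤ ∫ τ in (0:ℝ)..S, h τ :=
    intervalIntegral.integral_mono_interval le_rfl hs hsS (Filter.Eventually.of_forall h0)
      (hc.intervalIntegrable _ _)
  have h2 := integral_mul_div_rpow_le_integral (h := fun t => -h t) (σ := θ) hc.neg
    zero_lt_one (fun t ht => by
      have ht0 : 0 ≤ t := zero_le_one.trans ht
      have := hM1 t ht0
      rw [hh t ht0] at this
      have hht : h t = M t := by simp [h, ht0]
      simp only [intervalIntegral.integral_neg, hht]
      linarith) hS
  simp only [intervalIntegral.integral_neg, div_one] at h2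
  linarith

theorem one_lt_luxH {N : ℕ} {Ω : Set (EuclideanSpace ℝ (Fin N))} {p q : ℝ}
    {a w : EuclideanSpace ℝ (Fin N) → ℝ} (hΩ : MeasurableSet Ω) (hp : 0 < p) (hpq : p < q)
    (ha : ∀ x ∈ Ω, 0 ≤ a x) (hwp : IntegrableOn (fun x => |w x| ^ p) Ω)
    (hwq : IntegrableOn (fun x => a x * |w x| ^ q) Ω)
    (hw : 2 ^ p < ∫ x in Ω, |w x| ^ p) : 1 < luxH Ω p q a w := by
  have hrho : ∀ l : ℝ, 0 < l → rhoH Ω p q a (fun x => w x / l) =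
      (∫ x in Ω, |w x| ^ p) / l ^ p + (∫ x in Ω, a x * |w x| ^ q) / l ^ q := by
    intro l hl
    rw [← integral_div, ← integral_div, ← integral_add (hwp.div_const _) (hwq.div_const _)]
    refine integral_congr_ae (Filter.Eventually.of_forall fun x => ?_)
    simp only [abs_div, abs_of_pos hl, Real.div_rpow (abs_nonneg (w x)) hl.le]
    ring
  set I := ∫ x in Ω, |w x| ^ p
  set K := ∫ x in Ω, a x * |w x| ^ q
  have hK : 0 ≤ K := setIntegral_nonneg hΩ fun x hx =>
    mul_nonneg (ha x hx) (Real.rpow_nonneg (abs_nonneg _) _)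
  have hI : 0 < I := (Real.rpow_pos_of_pos two_pos p).trans hw
  have hlim : Filter.Tendsto (fun l : ℝ => I / l ^ p + K / l ^ q) Filter.atTop (nhds (0 + 0)) :=
    ((tendsto_rpow_atTop hp).const_div_atTop I).add
      ((tendsto_rpow_atTop (hp.trans hpq)).const_div_atTop K)
  rw [add_zero] at hlim
  obtain ⟨l, hl, hl0⟩ :=
    ((hlim.eventually (ge_mem_nhds one_pos)).and (Filter.eventually_gt_atTop 0)).exists
  refine one_lt_two.trans_le (le_csInf ⟨l, hl0, ?_⟩ ?_)
  · rw [hrho l hl0]; exact hl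
  · rintro m ⟨hm0, hm⟩
    rw [hrho m hm0] at hm
    by_contra! hm2
    have hmp : 0 < m ^ p := Real.rpow_pos_of_pos hm0 p
    have h1 : m ^ p < I := (Real.rpow_lt_rpow hm0.le hm2 hp).trans hw
    have h2 : 1 < I / m ^ p := (one_lt_div hmp).2 h1
    have h3 : 0 ≤ K / m ^ q := div_nonneg hK (Real.rpow_nonneg hm0.le _)
    linarith

theorem integral_norm_fderiv_rpow_pos {E : Type*} [NormedAddCommGroup E] [NormedSpace ℝ E]
    [FiniteDimensional ℝ E] [Nontrivial E] [MeasurableSpace E] [BorelSpace E] (μ : Measure E)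
    [μ.IsAddHaarMeasure] {φ : E → ℝ} (hφ : ContDiff ℝ 1 φ) (hcs : HasCompactSupport φ)
    {x₀ : E} (hx₀ : φ x₀ ≠ 0) {p : ℝ} (hp : 0 < p) : 0 < ∫ x, ‖fderiv ℝ φ x‖ ^ p ∂μ := by
  have hcont : Continuous fun x => ‖fderiv ℝ φ x‖ ^ p :=
    (hφ.continuous_fderiv one_ne_zero).norm.rpow_const fun _ => Or.inr hp.le
  obtain ⟨y, hy⟩ : ∃ y, fderiv ℝ φ y ≠ 0 := by
    by_contra! h
    have hconst := is_const_of_fderiv_eq_zero (hφ.differentiable one_ne_zero) h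
    have : NoncompactSpace E := NormedSpace.noncompactSpace ℝ E
    refine noncompact_univ E ?_
    have : tsupport φ = Set.univ := Set.eq_univ_of_forall fun x =>
      subset_tsupport φ (by rw [Function.mem_support, hconst x x₀]; exact hx₀)
    rw [← this]
    exact hcs
  refine hcont.integral_pos_of_hasCompactSupport_nonneg_nonzero ?_
    (fun x => Real.rpow_nonneg (norm_nonneg _) _) (x := y)
    (Real.rpow_pos_of_pos (norm_pos_iff.2 hy) p).ne'
  exact (hcs.fderiv ℝ).comp_left (g := fun L : E →L[ℝ] ℝ => ‖L‖ ^ p)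
    (by simp [Real.zero_rpow hp.ne'])

/-- Under the sub-power growth and the Ambrosetti–Rabinowitz condition, `∫ F(x, t φ)` grows at
least like `t ^ σ` along a nonnegative `φ` equal to `1` on a set `B`. -/
theorem exists_mul_rpow_sub_le_integral {X : Type*} [MeasurableSpace X] {μ : Measure X}
    [IsFiniteMeasure μ] {f : X → ℝ → ℝ} (hm : ∀ t, Measurable fun x => f x t)
    (hc : ∀ᵐ x ∂μ, Continuous (f x)) {A B α β : ℝ} (hA : 0 ≤ A) (hB : 0 ≤ B)
    (hα : 0 ≤ α) (hβ : 0 ≤ β) (hf : ∀ᵐ x ∂μ, ∀ t, |f x t| ≤ A * |t| ^ α + B * |t| ^ β)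
    {σ c t₀ : ℝ} (hσ : 0 < σ) (hc0 : 0 < c)
    (hAR : ∀ᵐ x ∂μ, ∀ t : ℝ, t₀ ≤ |t| →
      c ≤ σ * (∫ τ in (0:ℝ)..t, f x τ) ∧ σ * (∫ τ in (0:ℝ)..t, f x τ) ≤ t * f x t)
    {φ : X → ℝ} (hφ : Measurable φ) (hφ0 : ∀ x, 0 ≤ φ x) (hφ1 : ∀ x, φ x ≤ 1)
    {S : Set X} (hS : MeasurableSet S) (hSμ : μ S ≠ 0) (hφS : ∀ x ∈ S, φ x = 1) :
    ∃ b > 0, ∃ D, ∃ T, ∀ t, T ≤ t →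
      b * t ^ σ - D ≤ ∫ x, (∫ τ in (0:ℝ)..(t * φ x), f x τ) ∂μ := by
  set T := max t₀ 1
  have hT : 0 < T := zero_lt_one.trans_le (le_max_right _ _)
  have hTt : t₀ ≤ T := le_max_left _ _
  set D := (A * T ^ α + B * T ^ β) * T
  have hD : 0 ≤ D := by positivity
  set b := c / σ / T ^ σ
  have hb : 0 < b := by positivity
  have hSr : 0 < μ.real S := ENNReal.toReal_pos hSμ (measure_ne_top _ _)
  refine ⟨b * μ.real S, by positivity, D * μ.real Set.univ, T, fun t ht => ?_⟩
  have ht0 : 0 ≤ t := hT.le.trans ht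
  have hint : Integrable (fun x => ∫ τ in (0:ℝ)..(t * φ x), f x τ) μ := by
    refine Integrable.of_bound (aestronglyMeasurable_integral_of_caratheodory hm hc
      (hφ.const_mul t)) ((A * t ^ α + B * t ^ β) * t) ?_
    filter_upwards [hf] with x hx
    refine abs_integral_le_of_power_bound hA hB hα hβ hx ?_
    rw [abs_of_nonneg (mul_nonneg ht0 (hφ0 x))]
    exact mul_le_of_le_one_right ht0 (hφ1 x)
  have hint' : Integrable (S.indicator fun _ => b * t ^ σ) μ :=
    (integrable_const _).indicator hS
  calc b * μ.real S * t ^ σ - D * μ.real Set.univ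
      = ∫ x, (S.indicator (fun _ => b * t ^ σ) x - D) ∂μ := by
        rw [integral_sub hint' (integrable_const _), integral_indicator_const _ hS,
          integral_const, smul_eq_mul, smul_eq_mul]
        ring
    _ ≤ _ := by
        refine integral_mono_ae (hint'.sub (integrable_const _)) hint ?_
        filter_upwards [hc, hf, hAR] with x hcx hfx hx
        have hpos : ∀ s, T ≤ s → c / σ ≤ ∫ τ in (0:ℝ)..s, f x τ := by
          intro s hs
          rw [div_le_iff₀' hσ]
          exact (hx s (hTt.trans (hs.trans (le_abs_self s)))).1
        by_cases hxS : x ∈ S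
        · simp only [Set.indicator_of_mem hxS, hφS x hxS, mul_one]
          have h1 := integral_mul_div_rpow_le_integral hcx hT
            (fun s hs => (hx s (hTt.trans (hs.trans (le_abs_self s)))).2) ht
          have h2 : b * t ^ σ ≤ (∫ τ in (0:ℝ)..T, f x τ) * (t / T) ^ σ := by
            have h3 : b * t ^ σ = c / σ * (t / T) ^ σ := by
              rw [Real.div_rpow ht0 hT.le]
              ring
            rw [h3]
            exact mul_le_mul_of_nonneg_right (hpos T le_rfl) (by positivity)
          linarith
        · simp only [Set.indicator_of_notMem hxS, zero_sub]
          rcases le_total T (t * φ x) with h | h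
          · have := hpos _ h
            have : 0 < c / σ := by positivity
            linarith
          · refine (abs_le.1 (abs_integral_le_of_power_bound hA hB hα hβ hfx ?_)).1
            rwa [abs_of_nonneg (mul_nonneg ht0 (hφ0 x))]

/-- Lemma 3.2: under `(M₁)`, `(M₂)`, `(f₁)`, `(f₂)`, there exists `e ∈ C_c^∞(Ω)` with
`J(e) < 0` and `‖∇e‖_𝓗 > 1`, where `J(u) = 𝓜(φ_𝓗(∇u)) − ∫_Ω F(x,u)dx`. -/
theorem stmt_13 {N : ℕ} (hN : 2 ≤ N) (Ω : Set (EuclideanSpace ℝ (Fin N)))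
    (hΩo : IsOpen Ω) (hΩne : Ω.Nonempty) (hΩbd : Bornology.IsBounded Ω)
    (hΩlip : HasLipschitzBoundary Ω)
    (p q : ℝ) (hp : 1 < p) (hpq : p < q) (hqN : q < N) (hpqN : q / p < 1 + 1 / N)
    (a : EuclideanSpace ℝ (Fin N) → ℝ) (Ka : ℝ≥0)
    (haLip : LipschitzOnWith Ka a (closure Ω)) (ha0 : ∀ x ∈ closure Ω, 0 ≤ a x)
    -- (M₁)
    (M : ℝ → ℝ) (hMc : ContinuousOn M (Set.Ici 0)) (hM0 : ∀ t, 0 ≤ t → 0 ≤ M t)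
    (θ : ℝ) (hθ1 : 1 ≤ θ) (hθ2 : θ < (N * p / (N - p)) / q)
    (hM1 : ∀ t, 0 ≤ t → t * M t ≤ θ * ∫ τ in (0:ℝ)..t, M τ)
    -- (M₂)
    (hM2 : ∀ τ : ℝ, 0 < τ → ∃ κ > (0:ℝ), ∀ t, τ ≤ t → κ ≤ M t)
    -- f Carathéodory
    (f : EuclideanSpace ℝ (Fin N) → ℝ → ℝ)
    (hfmeas : ∀ t : ℝ, Measurable fun x => f x t)
    (hfcont : ∀ᵐ x ∂(volume.restrict Ω), Continuous (f x))
    -- (f₁)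
    (r : ℝ) (hr1 : q * θ < r) (hr2 : r < N * p / (N - p))
    (hf1 : ∀ ε > (0:ℝ), ∃ δ > (0:ℝ), ∀ᵐ x ∂(volume.restrict Ω), ∀ t : ℝ,
      |f x t| ≤ q * θ * ε * |t| ^ (q * θ - 1) + r * δ * |t| ^ (r - 1))
    -- (f₂)
    (σ c t₀ : ℝ) (hσ1 : q * θ < σ) (hσ2 : σ < N * p / (N - p)) (hcpos : 0 < c)
    (ht₀ : 0 ≤ t₀)
    (hf2 : ∀ᵐ x ∂(volume.restrict Ω), ∀ t : ℝ, t₀ ≤ |t| →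
      c ≤ σ * (∫ τ in (0:ℝ)..t, f x τ) ∧ σ * (∫ τ in (0:ℝ)..t, f x τ) ≤ t * f x t) :
    ∃ e : EuclideanSpace ℝ (Fin N) → ℝ, CcInfty Ω e ∧
      (∫ τ in (0:ℝ)..(∫ x in Ω, (‖fderiv ℝ e x‖ ^ p / p + a x * ‖fderiv ℝ e x‖ ^ q / q)), M τ)
          - (∫ x in Ω, ∫ τ in (0:ℝ)..(e x), f x τ) < 0 ∧
      1 < luxH Ω p q a (fun x => ‖fderiv ℝ e x‖) := by
  have hp0 : 0 < p := zero_lt_one.trans hp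
  have hq0 : 0 < q := hp0.trans hpq
  have hqθ : 1 ≤ q * θ := by nlinarith
  have hσ0 : 0 < σ := by linarith
  have : Nontrivial (EuclideanSpace ℝ (Fin N)) :=
    Module.nontrivial_of_finrank_pos (R := ℝ) (by rw [finrank_euclideanSpace_fin]; omega)
  have : IsFiniteMeasure (volume.restrict Ω) :=
    isFiniteMeasure_restrict.2 hΩbd.measure_lt_top.ne
  have hΩa : ∀ x ∈ Ω, 0 ≤ a x := fun x hx => ha0 x (subset_closure hx)
  -- a bump function supported in a small ball
  obtain ⟨x₀, hx₀⟩ := hΩne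
  obtain ⟨R, hR, hRΩ⟩ := Metric.nhds_basis_closedBall.mem_iff.1 (hΩo.mem_nhds hx₀)
  let φ : ContDiffBump x₀ := ⟨R / 2, R, half_pos hR, half_lt_self hR⟩
  have hφsupp : tsupport φ ⊆ Ω := by rw [φ.tsupport_eq]; exact hRΩ
  have hφs : ContDiff ℝ (⊤ : ℕ∞) φ := φ.contDiff
  have hφd : Differentiable ℝ φ := hφs.differentiable (by simp)
  set w : EuclideanSpace ℝ (Fin N) → ℝ := fun x => ‖fderiv ℝ φ x‖ with hw
  have hw0 : ∀ x, 0 ≤ w x := fun x => norm_nonneg _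
  have hwc : Continuous w := (φ.contDiff.continuous_fderiv (n := 1) one_ne_zero).norm
  have hcl : IsCompact (closure Ω) := hΩbd.isCompact_closure
  have hwp : IntegrableOn (fun x => w x ^ p) Ω :=
    ((hwc.rpow_const fun _ => Or.inr hp0.le).continuousOn.integrableOn_compact hcl).mono_set
      subset_closure
  have hwq : IntegrableOn (fun x => a x * w x ^ q) Ω :=
    ((haLip.continuousOn.mul (hwc.rpow_const fun _ => Or.inr hq0.le).continuousOn
      ).integrableOn_compact hcl).mono_set subset_closure
  have hI : 0 < ∫ x in Ω, w x ^ p := by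
    rw [setIntegral_eq_integral_of_forall_compl_eq_zero fun x hx => ?_]
    · exact integral_norm_fderiv_rpow_pos volume φ.contDiff φ.hasCompactSupport
        (x₀ := x₀) (φ.pos_of_mem_ball (Metric.mem_ball_self hR)).ne' hp0
    · have : fderiv ℝ φ x = 0 := by
        by_contra h
        exact hx (hφsupp (support_fderiv_subset ℝ h))
      simp [hw, this, Real.zero_rpow hp0.ne']
  set I := ∫ x in Ω, w x ^ p
  set P := ∫ x in Ω, (w x ^ p / p + a x * w x ^ q / q) with hP
  have hPint : IntegrableOn (fun x => w x ^ p / p + a x * w x ^ q / q) Ω :=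
    (hwp.div_const p).add (hwq.div_const q)
  have hP0 : 0 ≤ P := setIntegral_nonneg hΩo.measurableSet fun x hx => by
    have := hΩa x hx
    have := hw0 x
    positivity
  -- growth of the nonlinear term
  obtain ⟨δ, hδ, hfδ⟩ := hf1 1 one_pos
  obtain ⟨b, hb, D, T, hT⟩ := exists_mul_rpow_sub_le_integral hfmeas hfcont
    (A := q * θ * 1) (B := r * δ) (α := q * θ - 1) (β := r - 1) (by linarith)
    (mul_nonneg (by linarith) hδ.le) (by linarith) (by linarith) hfδ hσ0 hcpos hf2
    φ.continuous.measurable (fun x => φ.nonneg) (fun x => φ.le_one)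
    (S := Metric.ball x₀ (R / 2)) measurableSet_ball
    (by
      rw [Measure.restrict_apply measurableSet_ball, Set.inter_eq_left.2
        ((Metric.ball_subset_closedBall.trans (Metric.closedBall_subset_closedBall
          (half_le_self hR.le))).trans hRΩ)]
      exact (Metric.measure_ball_pos volume x₀ (half_pos hR)).ne')
    (fun x hx => φ.one_of_mem_closedBall (Metric.ball_subset_closedBall hx))
  set C := (∫ τ in (0:ℝ)..1, M τ) * (P + 1) ^ θ
  obtain ⟨t, ht1, htT, htI, htC⟩ := ((Filter.eventually_ge_atTop 1).and
    ((Filter.eventually_ge_atTop T).and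
      ((((tendsto_rpow_atTop hp0).atTop_mul_const hI).eventually_gt_atTop (2 ^ p)).and
        (((tendsto_rpow_atTop (sub_pos.2 hσ1)).const_mul_atTop hb).eventually_gt_atTop
          (C + |D|))))).exists
  have ht0 : 0 < t := zero_lt_one.trans_le ht1
  have hgrad : ∀ x, ‖fderiv ℝ (fun y => t * φ y) x‖ = t * w x := by
    intro x
    rw [fderiv_const_mul (hφd x), norm_smul, Real.norm_of_nonneg ht0.le]
  refine ⟨fun x => t * φ x, ⟨contDiff_const.mul hφs, φ.hasCompactSupport.mul_left,
    (tsupport_mul_subset_right (f := fun _ => t)).trans hφsupp⟩, ?_, ?_⟩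
  · simp only [hgrad]
    have hsplit : ∀ x, (t * w x) ^ p / p + a x * (t * w x) ^ q / q =
        t ^ p * (w x ^ p / p) + t ^ q * (a x * w x ^ q / q) := by
      intro x
      rw [Real.mul_rpow ht0.le (hw0 x), Real.mul_rpow ht0.le (hw0 x)]
      ring
    have henergy0 : 0 ≤ ∫ x in Ω, ((t * w x) ^ p / p + a x * (t * w x) ^ q / q) :=
      setIntegral_nonneg hΩo.measurableSet fun x hx => by
        have := hΩa x hx
        have := hw0 x
        positivity
    have henergy : ∫ x in Ω, ((t * w x) ^ p / p + a x * (t * w x) ^ q / q) ≤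
        t ^ q * (P + 1) := by
      have h1 : ∫ x in Ω, ((t * w x) ^ p / p + a x * (t * w x) ^ q / q) ≤ t ^ q * P := by
        rw [hP, ← integral_const_mul]
        simp only [hsplit]
        refine integral_mono (((hwp.div_const p).const_mul _).add
          ((hwq.div_const q).const_mul _)) (hPint.const_mul _) fun x => ?_
        have h2 : t ^ p ≤ t ^ q := Real.rpow_le_rpow_of_exponent_le ht1 hpq.le
        have h3 : 0 ≤ w x ^ p / p := div_nonneg (Real.rpow_nonneg (hw0 x) _) hp0.le
        have h4 := mul_le_mul_of_nonneg_right h2 h3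
        change _ ≤ t ^ q * (w x ^ p / p + a x * w x ^ q / q)
        linarith
      have h2 : 0 ≤ t ^ q := by positivity
      linarith
    have hone : 1 ≤ t ^ q * (P + 1) :=
      one_le_mul_of_one_le_of_one_le (Real.one_le_rpow ht1 hq0.le) (by linarith)
    have hM := integral_le_integral_one_mul_rpow hMc hM0 hM1 henergy0 henergy hone
    have hpow : (∫ τ in (0:ℝ)..1, M τ) * (t ^ q * (P + 1)) ^ θ = C * t ^ (q * θ) := by
      rw [Real.mul_rpow (by positivity) (by positivity), ← Real.rpow_mul ht0.le]
      ring
    have hF := hT t htT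
    have hsum : t ^ σ = t ^ (σ - q * θ) * t ^ (q * θ) := by
      rw [← Real.rpow_add ht0, sub_add_cancel]
    have htθ : 1 ≤ t ^ (q * θ) := Real.one_le_rpow ht1 (by linarith)
    have h5 : (C + |D|) * t ^ (q * θ) < b * t ^ σ := by
      rw [hsum, ← mul_assoc]
      exact mul_lt_mul_of_pos_right htC (by positivity)
    have h6 : D ≤ |D| * t ^ (q * θ) :=
      (le_abs_self D).trans (le_mul_of_one_le_right (abs_nonneg D) htθ)
    rw [hpow] at hM
    linarith
  · simp only [hgrad]
    have habs : ∀ x, |t * w x| = t * w x := fun x => abs_of_nonneg (mul_nonneg ht0.le (hw0 x))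
    refine one_lt_luxH hΩo.measurableSet hp0 hpq hΩa ?_ ?_ ?_
    · simp only [habs, Real.mul_rpow ht0.le (hw0 _)]
      exact hwp.const_mul _
    · simp only [habs, Real.mul_rpow ht0.le (hw0 _), mul_left_comm (a _)]
      exact hwq.const_mul _
    · simp only [habs, Real.mul_rpow ht0.le (hw0 _), integral_const_mul]
      exact htI
end

section
/- Assume (M₁), (M₂) and (f₁). Then there exist ρ ∈ (0,1] and α > 0 such that I(u) ≥ α for every u ∈ C_c^∞(Ω) with ‖∇u‖_𝓗 = ρ. -/
open MeasureTheory
open scoped NNReal RealInnerProductSpace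

/-- A bound `|g t| ≤ A s |t|^(s-1) + B r |t|^(r-1)` integrates to `A |t|^s + B |t|^r`. -/
lemma abs_intervalIntegral_le_of_abs_le_rpow {g : ℝ → ℝ} {s r A B : ℝ} (hs : 0 < s) (hr : 0 < r)
    (hg : ∀ t, |g t| ≤ s * A * |t| ^ (s - 1) + r * B * |t| ^ (r - 1)) (t : ℝ) :
    |∫ τ in (0:ℝ)..t, g τ| ≤ A * |t| ^ s + B * |t| ^ r := by
  wlog ht : 0 ≤ t generalizing g t
  · have h := this (g := fun τ => g (-τ)) (fun τ => by simpa using hg (-τ)) (-t) (by linarith)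
    rw [intervalIntegral.integral_comp_neg, intervalIntegral.integral_symm] at h
    simpa using h
  have hi : ∀ v : ℝ, 0 < v → IntervalIntegrable (fun τ : ℝ => τ ^ (v - 1)) volume 0 t := fun v hv =>
    intervalIntegral.intervalIntegrable_rpow' (by linarith)
  have h := intervalIntegral.norm_integral_le_of_norm_le (f := g) (μ := volume) (a := 0) (b := t)
    (g := fun τ => s * A * τ ^ (s - 1) + r * B * τ ^ (r - 1)) ht
    (Filter.Eventually.of_forall fun τ hτ => by
      have := hg τ
      rwa [abs_of_pos hτ.1] at this)
    (((hi s hs).const_mul _).add ((hi r hr).const_mul _))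
  rw [intervalIntegral.integral_add ((hi s hs).const_mul _) ((hi r hr).const_mul _),
    intervalIntegral.integral_const_mul, intervalIntegral.integral_const_mul,
    integral_rpow (Or.inl (by linarith)), integral_rpow (Or.inl (by linarith)),
    sub_add_cancel, sub_add_cancel, Real.zero_rpow hs.ne', Real.zero_rpow hr.ne',
    Real.norm_eq_abs] at h
  rw [abs_of_nonneg ht]
  refine h.trans_eq ?_
  field_simp
  ring

/-- If `t M(t) ≤ θ 𝓜(t)` then `𝓜(t) ≥ 𝓜(1) t^θ` on `[0,1]`, where `𝓜` is the primitive of `M`. -/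
lemma mul_rpow_le_primitive {M : ℝ → ℝ} (hMc : ContinuousOn M (Set.Ici 0)) {θ : ℝ} (hθ : 0 < θ)
    (hM : ∀ t, 0 ≤ t → t * M t ≤ θ * ∫ τ in (0:ℝ)..t, M τ) {t : ℝ} (ht0 : 0 ≤ t) (ht1 : t ≤ 1) :
    (∫ τ in (0:ℝ)..1, M τ) * t ^ θ ≤ ∫ τ in (0:ℝ)..t, M τ := by
  rcases ht0.eq_or_lt with rfl | ht
  · simp [Real.zero_rpow hθ.ne']
  have hd : ∀ x : ℝ, 0 < x → HasDerivAt (fun y => (∫ τ in (0:ℝ)..y, M τ) * y ^ (-θ))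
      (M x * x ^ (-θ) + (∫ τ in (0:ℝ)..x, M τ) * (-θ * x ^ (-θ - 1))) x := by
    intro x hx
    refine HasDerivAt.mul ?_ (Real.hasDerivAt_rpow_const (Or.inl hx.ne'))
    refine intervalIntegral.integral_hasDerivAt_right ?_ ?_ ?_
    · refine (hMc.mono ?_).intervalIntegrable
      rw [Set.uIcc_of_le hx.le]
      exact Set.Icc_subset_Ici_self
    · exact (hMc.mono Set.Ioi_subset_Ici_self).stronglyMeasurableAtFilter isOpen_Ioi x hx
    · exact hMc.continuousAt (Ici_mem_nhds hx)
  have hanti : AntitoneOn (fun y => (∫ τ in (0:ℝ)..y, M τ) * y ^ (-θ)) (Set.Ioi 0) := by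
    refine antitoneOn_of_deriv_nonpos (convex_Ioi 0)
      (fun x hx => (hd x hx).continuousAt.continuousWithinAt)
      (fun x hx => (hd x (by simpa using hx)).differentiableAt.differentiableWithinAt) ?_
    intro x hx
    rw [interior_Ioi] at hx
    have hx0 : 0 < x := hx
    rw [(hd x hx).deriv, Real.rpow_sub_one hx0.ne']
    have h1 : M x * x ^ (-θ) + (∫ τ in (0:ℝ)..x, M τ) * (-θ * (x ^ (-θ) / x)) =
        (x * M x - θ * ∫ τ in (0:ℝ)..x, M τ) * (x ^ (-θ) / x) := by
      field_simp
      ring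
    rw [h1]
    exact mul_nonpos_of_nonpos_of_nonneg (by linarith [hM x hx0.le]) (by positivity)
  have h := hanti (Set.mem_Ioi.2 ht) (Set.mem_Ioi.2 one_pos) ht1
  simp only [Real.one_rpow, mul_one] at h
  calc (∫ τ in (0:ℝ)..1, M τ) * t ^ θ
      ≤ (∫ τ in (0:ℝ)..t, M τ) * t ^ (-θ) * t ^ θ := by gcongr
    _ = ∫ τ in (0:ℝ)..t, M τ := by
      rw [mul_assoc, ← Real.rpow_add ht, neg_add_cancel, Real.rpow_zero, mul_one]

/-- The positive infimum of the sublevel set `P l^(-p) + Q l^(-q) ≤ 1` attains equality. -/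
lemma modular_sInf_eq_one {P Q p q ρ : ℝ} (hP : 0 ≤ P) (hQ : 0 ≤ Q) (hp : 0 < p) (hq : 0 < q)
    (hρ : 0 < ρ) (h : sInf {l : ℝ | 0 < l ∧ P * l ^ (-p) + Q * l ^ (-q) ≤ 1} = ρ) :
    P * ρ ^ (-p) + Q * ρ ^ (-q) = 1 := by
  set S := {l : ℝ | 0 < l ∧ P * l ^ (-p) + Q * l ^ (-q) ≤ 1} with hS
  have hbdd : BddBelow S := ⟨0, fun l hl => hl.1.le⟩
  have hne : S.Nonempty := by
    by_contra hne
    rw [Set.not_nonempty_iff_eq_empty.1 hne, Real.sInf_empty] at h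
    exact hρ.ne h
  have hcont : ContinuousAt (fun l : ℝ => P * l ^ (-p) + Q * l ^ (-q)) ρ :=
    ((Real.continuousAt_rpow_const _ _ (Or.inl hρ.ne')).const_mul P).add
      ((Real.continuousAt_rpow_const _ _ (Or.inl hρ.ne')).const_mul Q)
  apply le_antisymm
  · refine le_of_tendsto (hcont.tendsto.mono_left (nhdsWithin_le_nhds (s := Set.Ioi ρ))) ?_
    filter_upwards [self_mem_nhdsWithin] with l hl
    obtain ⟨l', hl', hlt⟩ := exists_lt_of_csInf_lt hne (h.trans_lt hl)
    have h1 := Real.rpow_le_rpow_of_nonpos hl'.1 hlt.le (neg_nonpos.2 hp.le)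
    have h2 := Real.rpow_le_rpow_of_nonpos hl'.1 hlt.le (neg_nonpos.2 hq.le)
    exact (add_le_add (mul_le_mul_of_nonneg_left h1 hP) (mul_le_mul_of_nonneg_left h2 hQ)).trans
      hl'.2
  · refine ge_of_tendsto (hcont.tendsto.mono_left (nhdsWithin_le_nhds (s := Set.Iio ρ))) ?_
    filter_upwards [self_mem_nhdsWithin, nhdsWithin_le_nhds (Ioi_mem_nhds hρ)] with l hl hl0
    by_contra! hlt
    exact (csInf_le hbdd ⟨hl0, hlt.le⟩).not_gt (h ▸ hl)

section CcInfty

variable {N : ℕ} {Ω : Set (EuclideanSpace ℝ (Fin N))} {u : EuclideanSpace ℝ (Fin N) → ℝ}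

lemma CcInfty.continuous_fderiv (hu : CcInfty Ω u) : Continuous (fderiv ℝ u) :=
  hu.1.continuous_fderiv (by simp)

lemma CcInfty.integrable_abs_rpow (hu : CcInfty Ω u) {s : ℝ} (hs : 0 < s) :
    Integrable (fun x => |u x| ^ s) := by
  refine Continuous.integrable_of_hasCompactSupport
    (hu.1.continuous.abs.rpow_const fun _ => Or.inr hs.le) ?_
  exact hu.2.1.comp_left (g := fun t : ℝ => |t| ^ s) (by simp [Real.zero_rpow hs.ne'])

lemma CcInfty.integrable_norm_fderiv_rpow (hu : CcInfty Ω u) {s : ℝ} (hs : 0 < s) :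
    Integrable (fun x => ‖fderiv ℝ u x‖ ^ s) := by
  refine Continuous.integrable_of_hasCompactSupport
    (hu.continuous_fderiv.norm.rpow_const fun _ => Or.inr hs.le) ?_
  exact (hu.2.1.fderiv ℝ).comp_left (g := fun t => ‖t‖ ^ s) (by simp [Real.zero_rpow hs.ne'])

lemma CcInfty.integrableOn_mul_norm_fderiv_rpow (hu : CcInfty Ω u) (hΩ : Bornology.IsBounded Ω)
    {a : EuclideanSpace ℝ (Fin N) → ℝ} (ha : ContinuousOn a (closure Ω)) {s : ℝ} (hs : 0 < s) :
    IntegrableOn (fun x => a x * ‖fderiv ℝ u x‖ ^ s) Ω :=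
  ((ha.mul (hu.continuous_fderiv.norm.rpow_const
    fun _ => Or.inr hs.le).continuousOn).integrableOn_compact hΩ.isCompact_closure).mono_set
      subset_closure

/-- For test functions the modular of `∇u / l` splits into its two homogeneous parts. -/
lemma CcInfty.rhoH_div (hu : CcInfty Ω u) (hΩo : IsOpen Ω) (hΩ : Bornology.IsBounded Ω)
    {a : EuclideanSpace ℝ (Fin N) → ℝ} (ha : ContinuousOn a (closure Ω)) {p q l : ℝ} (hp : 0 < p)
    (hq : 0 < q) (hl : 0 < l) :
    rhoH Ω p q a (fun x => ‖fderiv ℝ u x‖ / l) =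
      (∫ x in Ω, ‖fderiv ℝ u x‖ ^ p) * l ^ (-p)
        + (∫ x in Ω, a x * ‖fderiv ℝ u x‖ ^ q) * l ^ (-q) := by
  rw [← integral_mul_const, ← integral_mul_const, ← integral_add
    ((hu.integrable_norm_fderiv_rpow hp).integrableOn.mul_const _)
    ((hu.integrableOn_mul_norm_fderiv_rpow hΩ ha hq).mul_const _)]
  refine setIntegral_congr_fun hΩo.measurableSet fun x _ => ?_
  have hn : |‖fderiv ℝ u x‖ / l| = ‖fderiv ℝ u x‖ * l⁻¹ := by
    rw [abs_of_nonneg (by positivity), div_eq_mul_inv]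
  simp only [hn]
  rw [Real.mul_rpow (norm_nonneg _) (by positivity), Real.mul_rpow (norm_nonneg _) (by positivity),
    Real.inv_rpow hl.le, Real.inv_rpow hl.le, Real.rpow_neg hl.le, Real.rpow_neg hl.le, mul_assoc]

/-- Sobolev inequality for test functions in modular form. -/
lemma exists_integral_abs_rpow_le (hΩ : Bornology.IsBounded Ω) {p s : ℝ} (hp : 1 ≤ p)
    (hpN : p < N) (hs : 0 < s) (hsp : s ≤ N * p / (N - p)) :
    ∃ C > (0:ℝ), ∀ u : EuclideanSpace ℝ (Fin N) → ℝ, CcInfty Ω u → ∀ ρ : ℝ, 0 ≤ ρ →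
      (∫ x in Ω, ‖fderiv ℝ u x‖ ^ p) ≤ ρ ^ p → (∫ x in Ω, |u x| ^ s) ≤ C * ρ ^ s := by
  have hp0 : 0 < p := by linarith
  lift p to ℝ≥0 using hp0.le
  lift s to ℝ≥0 using hs.le
  have hfin : Module.finrank ℝ (EuclideanSpace ℝ (Fin N)) = N := by simp
  have hNp : (0:ℝ) < N - p := by linarith
  have hexp : ((p⁻¹ : ℝ≥0) : ℝ) - (N : ℝ)⁻¹ ≤ (s : ℝ)⁻¹ := by
    have hN0 : (0:ℝ) < N := by linarith
    have h1 : ((p⁻¹ : ℝ≥0) : ℝ) - (N : ℝ)⁻¹ = (N * p / (N - p) : ℝ)⁻¹ := by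
      push_cast
      field_simp
    rw [h1]
    exact inv_anti₀ hs hsp
  set K := eLpNormLESNormFDerivOfLeConst ℝ (volume : Measure (EuclideanSpace ℝ (Fin N))) Ω p s
  refine ⟨((K : ℝ) + 1) ^ (s : ℝ), by positivity, fun u hu ρ hρ hP => ?_⟩
  have hsob := eLpNorm_le_eLpNorm_fderiv_of_le
    (volume : Measure (EuclideanSpace ℝ (Fin N))) (u := u) (s := Ω) (p := p) (q := s)
    (hu.1.of_le (by simp)) ((subset_tsupport u).trans hu.2.2) (by exact_mod_cast hp)
    (by rw [hfin]; exact_mod_cast hpN) (by rw [hfin]; exact hexp) hΩ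
  have hmu : MemLp u s volume := hu.1.continuous.memLp_of_hasCompactSupport hu.2.1
  have hmd : MemLp (fderiv ℝ u) p volume :=
    hu.continuous_fderiv.memLp_of_hasCompactSupport (hu.2.1.fderiv ℝ)
  rw [hmu.eLpNorm_eq_integral_rpow_norm (by exact_mod_cast hs.ne') (by simp),
    hmd.eLpNorm_eq_integral_rpow_norm (by exact_mod_cast hp0.ne') (by simp)] at hsob
  simp only [ENNReal.coe_toReal] at hsob
  have hup : (∫ x in Ω, ‖fderiv ℝ u x‖ ^ (p : ℝ)) = ∫ x, ‖fderiv ℝ u x‖ ^ (p : ℝ) := by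
    refine setIntegral_eq_integral_of_forall_compl_eq_zero fun x hx => ?_
    have : fderiv ℝ u x = 0 := by
      by_contra h0
      exact hx (hu.2.2 (support_fderiv_subset ℝ h0))
    simp [this, Real.zero_rpow hp0.ne']
  have hus : (∫ x in Ω, |u x| ^ (s : ℝ)) ≤ ∫ x, ‖u x‖ ^ (s : ℝ) :=
    setIntegral_le_integral (hu.integrable_abs_rpow hs)
      (Filter.Eventually.of_forall fun x => by positivity)
  rw [hup] at hP
  have hP0 : 0 ≤ ∫ x, ‖fderiv ℝ u x‖ ^ (p : ℝ) := integral_nonneg fun x => by positivity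
  have hS0 : 0 ≤ ∫ x, ‖u x‖ ^ (s : ℝ) := integral_nonneg fun x => by positivity
  have h2 : (∫ x, ‖u x‖ ^ (s : ℝ)) ^ (s : ℝ)⁻¹ ≤
      K * (∫ x, ‖fderiv ℝ u x‖ ^ (p : ℝ)) ^ (p : ℝ)⁻¹ := by
    rw [← ENNReal.ofReal_coe_nnreal, ← ENNReal.ofReal_mul (by positivity)] at hsob
    exact (ENNReal.ofReal_le_ofReal_iff (by positivity)).1 hsob
  have h3 : (∫ x, ‖fderiv ℝ u x‖ ^ (p : ℝ)) ^ (p : ℝ)⁻¹ ≤ ρ := by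
    calc _ ≤ (ρ ^ (p : ℝ)) ^ (p : ℝ)⁻¹ := by gcongr
      _ = ρ := Real.rpow_rpow_inv hρ hp0.ne'
  have h4 : (∫ x, ‖u x‖ ^ (s : ℝ)) ^ (s : ℝ)⁻¹ ≤ (K + 1) * ρ := by
    refine h2.trans ?_
    gcongr
    simp
  calc _ ≤ ∫ x, ‖u x‖ ^ (s : ℝ) := hus
    _ = ((∫ x, ‖u x‖ ^ (s : ℝ)) ^ (s : ℝ)⁻¹) ^ (s : ℝ) := (Real.rpow_inv_rpow hS0 hs.ne').symm
    _ ≤ ((K + 1) * ρ) ^ (s : ℝ) := by gcongr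
    _ = _ := Real.mul_rpow (by positivity) hρ

end CcInfty

/-- Lemma 4.1: under `(M₁)`, `(M₂)`, `(f₁)`, there are `ρ ∈ (0,1]` and `α > 0` such that
`I(u) ≥ α` whenever `u ∈ C_c^∞(Ω)` and `‖∇u‖_𝓗 = ρ`, where
`I(u) = (1/p)𝓜(‖∇u‖_p^p) + (1/q)𝓜(‖∇u‖_{q,a}^q) − ∫_Ω F(x,u)dx`. -/
theorem stmt_14 {N : ℕ} (hN : 2 ≤ N) (Ω : Set (EuclideanSpace ℝ (Fin N)))
    (hΩo : IsOpen Ω) (hΩne : Ω.Nonempty) (hΩbd : Bornology.IsBounded Ω)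
    (hΩlip : HasLipschitzBoundary Ω)
    (p q : ℝ) (hp : 1 < p) (hpq : p < q) (hqN : q < N) (hpqN : q / p < 1 + 1 / N)
    (a : EuclideanSpace ℝ (Fin N) → ℝ) (Ka : ℝ≥0)
    (haLip : LipschitzOnWith Ka a (closure Ω)) (ha0 : ∀ x ∈ closure Ω, 0 ≤ a x)
    -- (M₁)
    (M : ℝ → ℝ) (hMc : ContinuousOn M (Set.Ici 0)) (hM0 : ∀ t, 0 ≤ t → 0 ≤ M t)
    (θ : ℝ) (hθ1 : 1 ≤ θ) (hθ2 : θ < (N * p / (N - p)) / q)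
    (hM1 : ∀ t, 0 ≤ t → t * M t ≤ θ * ∫ τ in (0:ℝ)..t, M τ)
    -- (M₂)
    (hM2 : ∀ τ : ℝ, 0 < τ → ∃ κ > (0:ℝ), ∀ t, τ ≤ t → κ ≤ M t)
    -- f Carathéodory
    (f : EuclideanSpace ℝ (Fin N) → ℝ → ℝ)
    (hfmeas : ∀ t : ℝ, Measurable fun x => f x t)
    (hfcont : ∀ᵐ x ∂(volume.restrict Ω), Continuous (f x))
    -- (f₁)
    (r : ℝ) (hr1 : q * θ < r) (hr2 : r < N * p / (N - p))
    (hf1 : ∀ ε > (0:ℝ), ∃ δ > (0:ℝ), ∀ᵐ x ∂(volume.restrict Ω), ∀ t : ℝ,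
      |f x t| ≤ q * θ * ε * |t| ^ (q * θ - 1) + r * δ * |t| ^ (r - 1)) :
    ∃ ρ : ℝ, ρ ∈ Set.Ioc (0:ℝ) 1 ∧ ∃ α > (0:ℝ),
      ∀ u : EuclideanSpace ℝ (Fin N) → ℝ, CcInfty Ω u →
        luxH Ω p q a (fun x => ‖fderiv ℝ u x‖) = ρ →
        α ≤ (1 / p) * (∫ τ in (0:ℝ)..(∫ x in Ω, ‖fderiv ℝ u x‖ ^ p), M τ)
            + (1 / q) * (∫ τ in (0:ℝ)..(∫ x in Ω, a x * ‖fderiv ℝ u x‖ ^ q), M τ)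
            - ∫ x in Ω, ∫ τ in (0:ℝ)..(u x), f x τ := by
  have hp0 : 0 < p := by linarith
  have hq0 : 0 < q := by linarith
  have hθ0 : 0 < θ := by linarith
  have hs0 : 0 < q * θ := by positivity
  have hr0 : 0 < r := by linarith
  obtain ⟨C₁, hC₁, hsob₁⟩ := exists_integral_abs_rpow_le hΩbd hp.le (hpq.trans hqN) hs0
    (hr1.trans hr2).le
  obtain ⟨C₂, hC₂, hsob₂⟩ := exists_integral_abs_rpow_le hΩbd hp.le (hpq.trans hqN) hr0 hr2.le
  have hM1pos : 0 < ∫ τ in (0:ℝ)..1, M τ := by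
    obtain ⟨κ, hκ, hκM⟩ := hM2 1 one_pos
    have := hM1 1 zero_le_one
    rw [one_mul] at this
    exact pos_of_mul_pos_right ((hκ.trans_le (hκM 1 le_rfl)).trans_le this) hθ0.le
  set m := ∫ τ in (0:ℝ)..1, M τ with hm
  have hc : 0 < m / q * (1 / 2) ^ θ := by positivity
  set c := m / q * (1 / 2) ^ θ with hcdef
  obtain ⟨δ, hδ, hf⟩ := hf1 (c / (2 * C₁)) (by positivity)
  have hrs : 0 < r - q * θ := by linarith
  have hb : 0 < c / (4 * (δ * C₂)) := by positivity
  set ρ := min 1 ((c / (4 * (δ * C₂))) ^ (r - q * θ)⁻¹) with hρdef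
  have hρ0 : 0 < ρ := lt_min one_pos (by positivity)
  have hρ1 : ρ ≤ 1 := min_le_left _ _
  have hρr : δ * (C₂ * ρ ^ r) ≤ c / 4 * ρ ^ (q * θ) := by
    have h1 : ρ ^ (r - q * θ) ≤ c / (4 * (δ * C₂)) := by
      calc ρ ^ (r - q * θ) ≤ ((c / (4 * (δ * C₂))) ^ (r - q * θ)⁻¹) ^ (r - q * θ) := by
            gcongr
            exact min_le_right _ _
        _ = _ := Real.rpow_inv_rpow hb.le hrs.ne'
    have h2 : ρ ^ r = ρ ^ (r - q * θ) * ρ ^ (q * θ) := by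
      rw [← Real.rpow_add hρ0, sub_add_cancel]
    calc δ * (C₂ * ρ ^ r) = δ * C₂ * ρ ^ (r - q * θ) * ρ ^ (q * θ) := by rw [h2]; ring
      _ ≤ δ * C₂ * (c / (4 * (δ * C₂))) * ρ ^ (q * θ) := by gcongr
      _ = c / 4 * ρ ^ (q * θ) := by field_simp
  refine ⟨ρ, ⟨hρ0, hρ1⟩, c / 4 * ρ ^ (q * θ), by positivity, fun u hu hlux => ?_⟩
  have hP0 : 0 ≤ ∫ x in Ω, ‖fderiv ℝ u x‖ ^ p := integral_nonneg fun x => by positivity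
  have hQ0 : 0 ≤ ∫ x in Ω, a x * ‖fderiv ℝ u x‖ ^ q :=
    setIntegral_nonneg hΩo.measurableSet fun x hx =>
      mul_nonneg (ha0 x (subset_closure hx)) (by positivity)
  have hset : {l : ℝ | 0 < l ∧ rhoH Ω p q a (fun x => ‖fderiv ℝ u x‖ / l) ≤ 1} =
      {l : ℝ | 0 < l ∧ (∫ x in Ω, ‖fderiv ℝ u x‖ ^ p) * l ^ (-p)
        + (∫ x in Ω, a x * ‖fderiv ℝ u x‖ ^ q) * l ^ (-q) ≤ 1} := by
    ext l
    refine and_congr_right fun hl => ?_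
    rw [hu.rhoH_div hΩo hΩbd haLip.continuousOn hp0 hq0 hl]
  rw [luxH, hset] at hlux
  have hone := modular_sInf_eq_one hP0 hQ0 hp0 hq0 hρ0 hlux
  set P := ∫ x in Ω, ‖fderiv ℝ u x‖ ^ p
  set Q := ∫ x in Ω, a x * ‖fderiv ℝ u x‖ ^ q
  rw [Real.rpow_neg hρ0.le, Real.rpow_neg hρ0.le, ← div_eq_mul_inv, ← div_eq_mul_inv] at hone
  have hPρ : P ≤ ρ ^ p := by
    have : 0 ≤ Q / ρ ^ q := by positivity
    exact (div_le_one (by positivity)).1 (by linarith)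
  have hQρ : Q ≤ ρ ^ q := by
    have : 0 ≤ P / ρ ^ p := by positivity
    exact (div_le_one (by positivity)).1 (by linarith)
  have hP1 : P ≤ 1 := hPρ.trans (Real.rpow_le_one hρ0.le hρ1 hp0.le)
  have hQ1 : Q ≤ 1 := hQρ.trans (Real.rpow_le_one hρ0.le hρ1 hq0.le)
  have hsum : ρ ^ q ≤ P + Q := by
    have h1 : P / ρ ^ p ≤ P / ρ ^ q :=
      div_le_div_of_nonneg_left hP0 (by positivity)
        (Real.rpow_le_rpow_of_exponent_ge hρ0 hρ1 hpq.le)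
    have h2 : 1 ≤ (P + Q) / ρ ^ q := by
      rw [add_div]
      linarith
    exact (one_le_div (by positivity)).1 h2
  have hθsum : (1 / 2) ^ θ * ρ ^ (q * θ) ≤ P ^ θ + Q ^ θ := by
    have h1 : (1 / 2) ^ θ * ρ ^ (q * θ) = (1 / 2 * ρ ^ q) ^ θ := by
      rw [Real.mul_rpow (by norm_num) (by positivity), ← Real.rpow_mul hρ0.le]
    rw [h1]
    have hPθ : 0 ≤ P ^ θ := by positivity
    have hQθ : 0 ≤ Q ^ θ := by positivity
    rcases le_total P Q with hPQ | hPQ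
    · have := Real.rpow_le_rpow (by positivity) (show 1 / 2 * ρ ^ q ≤ Q by linarith) hθ0.le
      linarith
    · have := Real.rpow_le_rpow (by positivity) (show 1 / 2 * ρ ^ q ≤ P by linarith) hθ0.le
      linarith
  have hkirch : c * ρ ^ (q * θ) ≤
      (1 / p) * (∫ τ in (0:ℝ)..P, M τ) + (1 / q) * (∫ τ in (0:ℝ)..Q, M τ) := by
    have hMP := mul_rpow_le_primitive hMc hθ0 hM1 hP0 hP1
    have hMQ := mul_rpow_le_primitive hMc hθ0 hM1 hQ0 hQ1
    calc c * ρ ^ (q * θ) = m / q * ((1 / 2) ^ θ * ρ ^ (q * θ)) := by rw [hcdef]; ring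
      _ ≤ m / q * (P ^ θ + Q ^ θ) := by gcongr
      _ = (1 / q) * (m * P ^ θ) + (1 / q) * (m * Q ^ θ) := by ring
      _ ≤ _ := by gcongr
  have hF : ∫ x in Ω, ∫ τ in (0:ℝ)..(u x), f x τ ≤
      c / (2 * C₁) * (∫ x in Ω, |u x| ^ (q * θ)) + δ * ∫ x in Ω, |u x| ^ r := by
    have hi₁ := ((hu.integrable_abs_rpow hs0).integrableOn (s := Ω)).const_mul (c / (2 * C₁))
    have hi₂ := ((hu.integrable_abs_rpow hr0).integrableOn (s := Ω)).const_mul δ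
    rw [← integral_const_mul, ← integral_const_mul, ← integral_add hi₁ hi₂]
    refine (Real.le_norm_self _).trans (norm_integral_le_of_norm_le (hi₁.add hi₂) ?_)
    filter_upwards [hf] with x hx
    exact abs_intervalIntegral_le_of_abs_le_rpow hs0 hr0 hx (u x)
  have h₁ : c / (2 * C₁) * (∫ x in Ω, |u x| ^ (q * θ)) ≤ c / 2 * ρ ^ (q * θ) := by
    calc _ ≤ c / (2 * C₁) * (C₁ * ρ ^ (q * θ)) := by gcongr; exact hsob₁ u hu ρ hρ0.le hPρ
      _ = _ := by field_simp
  have h₂ : δ * (∫ x in Ω, |u x| ^ r) ≤ δ * (C₂ * ρ ^ r) := by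
    gcongr
    exact hsob₂ u hu ρ hρ0.le hPρ
  linarith
end

section
/- Assume (M₁), (M₂), (f₁) and (f₂), and assume in addition that a is not almost everywhere equal to 0 on Ω. Then there exists e ∈ C_c^∞(Ω) such that I(e) < 0, ‖∇e‖_p ≥ 1 and ‖∇e‖_{q,a} ≥ 1. -/
open MeasureTheory
open scoped NNReal RealInnerProductSpace

/-- If `t h(t) ≤ s ∫₀ᵗ h` for `t ≥ T`, the primitive of `h` grows at most like `t ^ s`. -/
lemma integral_le_mul_rpow_of_mul_le {h : ℝ → ℝ} (hc : Continuous h) {T s : ℝ} (hT : 0 < T)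
    (hle : ∀ t, T ≤ t → t * h t ≤ s * ∫ τ in (0:ℝ)..t, h τ) {t : ℝ} (ht : T ≤ t) :
    ∫ τ in (0:ℝ)..t, h τ ≤ (∫ τ in (0:ℝ)..T, h τ) * (t / T) ^ s := by
  have hder : ∀ x, T ≤ x → HasDerivAt (fun t => (∫ τ in (0:ℝ)..t, h τ) * t ^ (-s))
      (h x * x ^ (-s) + (∫ τ in (0:ℝ)..x, h τ) * (-s * x ^ (-s - 1))) x := fun x hx =>
    (hc.integral_hasStrictDerivAt 0 x).hasDerivAt.mul
      (Real.hasDerivAt_rpow_const (Or.inl (hT.trans_le hx).ne'))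
  have hanti : AntitoneOn (fun t => (∫ τ in (0:ℝ)..t, h τ) * t ^ (-s)) (Set.Ici T) := by
    refine antitoneOn_of_deriv_nonpos (convex_Ici T)
      (fun x hx => (hder x hx).continuousAt.continuousWithinAt)
      (fun x hx => (hder x (interior_subset hx)).differentiableAt.differentiableWithinAt) ?_
    intro x hx
    have hx' : T ≤ x := interior_subset hx
    have hx0 : 0 < x := hT.trans_le hx'
    rw [(hder x hx').deriv]
    have h1 : x ^ (-s) = x ^ (-s - 1) * x := by
      rw [Real.rpow_sub_one hx0.ne']
      field_simp
    rw [h1]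
    have := mul_le_mul_of_nonneg_left (hle x hx') (Real.rpow_nonneg hx0.le (-s - 1))
    linarith
  have ht0 : 0 < t := hT.trans_le ht
  have key := hanti (Set.mem_Ici.2 le_rfl) (Set.mem_Ici.2 ht) ht
  simp only [Real.rpow_neg ht0.le, Real.rpow_neg hT.le] at key
  rw [Real.div_rpow ht0.le hT.le, ← mul_div_assoc]
  have hts := Real.rpow_pos_of_pos ht0 s
  calc _ = (∫ τ in (0:ℝ)..t, h τ) * (t ^ s)⁻¹ * t ^ s := by field_simp
    _ ≤ (∫ τ in (0:ℝ)..T, h τ) * (T ^ s)⁻¹ * t ^ s := by gcongr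
    _ = _ := by ring

/-- Growth of the primitive of a function which is continuous on `[0, ∞)`. -/
lemma integral_le_mul_rpow_of_continuousOn {M : ℝ → ℝ} (hM : ContinuousOn M (Set.Ici 0)) {θ : ℝ}
    (hle : ∀ t, 0 ≤ t → t * M t ≤ θ * ∫ τ in (0:ℝ)..t, M τ) {t : ℝ} (ht : 1 ≤ t) :
    ∫ τ in (0:ℝ)..t, M τ ≤ (∫ τ in (0:ℝ)..1, M τ) * t ^ θ := by
  have hc : Continuous fun t => M (max t 0) :=
    hM.comp_continuous (by fun_prop) fun x => le_max_right x 0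
  have heq : ∀ t, 0 ≤ t → ∫ τ in (0:ℝ)..t, M (max τ 0) = ∫ τ in (0:ℝ)..t, M τ := by
    intro t ht
    refine intervalIntegral.integral_congr fun τ hτ => ?_
    rw [Set.uIcc_of_le ht] at hτ
    simp only [max_eq_left hτ.1]
  have := integral_le_mul_rpow_of_mul_le hc (s := θ) one_pos (fun t ht => by
    have ht0 : (0:ℝ) ≤ t := zero_le_one.trans ht
    rw [heq t ht0, max_eq_left ht0]
    exact hle t ht0) ht
  rwa [heq t (zero_le_one.trans ht), heq 1 zero_le_one, div_one] at this

/-- A primitive of a Carathéodory function composed with a measurable function is measurable. -/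
lemma aestronglyMeasurable_integral_caratheodory {X : Type*} [MeasurableSpace X] {μ : Measure X}
    {f : X → ℝ → ℝ} (hfm : ∀ t, Measurable fun x => f x t) (hfc : ∀ᵐ x ∂μ, Continuous (f x))
    {u : X → ℝ} (hu : Measurable u) :
    AEStronglyMeasurable (fun x => ∫ τ in (0:ℝ)..(u x), f x τ) μ := by
  obtain ⟨S, hS, hSm, hS0⟩ := exists_measurable_superset_of_null (ae_iff.1 hfc)
  let g : X → ℝ → ℝ := fun x t => Sᶜ.indicator (fun x => f x t) x
  have hgm : ∀ t, StronglyMeasurable fun x => g x t := fun t =>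
    ((hfm t).indicator hSm.compl).stronglyMeasurable
  have hgc : ∀ x, Continuous (g x) := by
    intro x
    by_cases hx : x ∈ S
    · simpa [g, hx] using continuous_const
    · have hxc : Continuous (f x) := by
        by_contra hcon
        exact hx (hS hcon)
      simpa [g, hx] using hxc
  have hg : StronglyMeasurable (Function.uncurry fun (t : ℝ) x => g x t) :=
    stronglyMeasurable_uncurry_of_continuous_of_stronglyMeasurable (u := fun t x => g x t)
      hgc hgm
  have hgu : StronglyMeasurable fun z : X × ℝ => g z.1 (u z.1 * z.2) :=
    hg.comp_measurable (g := fun z : X × ℝ => (u z.1 * z.2, z.1)) (by fun_prop)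
  have hint : StronglyMeasurable fun x => ∫ s in Set.Ioc (0:ℝ) 1, g x (u x * s) :=
    hgu.integral_prod_right'
  refine ⟨fun x => u x * ∫ s in Set.Ioc (0:ℝ) 1, g x (u x * s),
    hu.stronglyMeasurable.mul hint, ?_⟩
  have hSae : ∀ᵐ x ∂μ, x ∉ S := measure_eq_zero_iff_ae_notMem.1 hS0
  filter_upwards [hSae] with x hx
  have hgf : g x = f x := by
    funext t
    simp [g, hx]
  rw [hgf, ← intervalIntegral.integral_of_le zero_le_one,
    intervalIntegral.mul_integral_comp_mul_left, mul_zero, mul_one]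

/-- A nonnegative continuous function which is positive somewhere has positive integral. -/
lemma setIntegral_pos_of_continuousOn {N : ℕ} {Ω : Set (EuclideanSpace ℝ (Fin N))}
    (hΩo : IsOpen Ω) (hΩbd : Bornology.IsBounded Ω) {g : EuclideanSpace ℝ (Fin N) → ℝ}
    (hg : ContinuousOn g (closure Ω)) (hg0 : ∀ x ∈ closure Ω, 0 ≤ g x)
    {y : EuclideanSpace ℝ (Fin N)} (hy : y ∈ Ω) (hgy : 0 < g y) : 0 < ∫ x in Ω, g x := by
  have hint : IntegrableOn g Ω :=
    (hg.integrableOn_compact hΩbd.isCompact_closure).mono_set subset_closure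
  rw [setIntegral_pos_iff_support_of_nonneg_ae
    ((ae_restrict_iff' hΩo.measurableSet).2 (ae_of_all _ fun x hx => hg0 x (subset_closure hx)))
    hint]
  have hopen : IsOpen (Ω ∩ g ⁻¹' Set.Ioi 0) :=
    (hg.mono subset_closure).isOpen_inter_preimage hΩo isOpen_Ioi
  refine (hopen.measure_pos volume ⟨y, hy, hgy⟩).trans_le (measure_mono ?_)
  exact fun x hx => ⟨(ne_of_gt hx.2 : g x ≠ 0), hx.1⟩

/-- Nonempty open sets carry nonnegative test functions with nonvanishing gradient. -/
lemma exists_ccInfty_fderiv_ne_zero {N : ℕ} (hN : 0 < N) {U : Set (EuclideanSpace ℝ (Fin N))}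
    (hU : IsOpen U) {x₀ : EuclideanSpace ℝ (Fin N)} (hx₀ : x₀ ∈ U) :
    ∃ u, CcInfty U u ∧ (∀ x, 0 ≤ u x) ∧ (∀ x, u x ≤ 1) ∧ u x₀ = 1 ∧
      ∃ y ∈ U, fderiv ℝ u y ≠ 0 := by
  have : Nonempty (Fin N) := ⟨⟨0, hN⟩⟩
  have : NoncompactSpace (EuclideanSpace ℝ (Fin N)) := NormedSpace.noncompactSpace ℝ _
  obtain ⟨u, hsupp, hcs, hsm, hr, hux⟩ :=
    exists_contDiff_tsupport_subset (n := ⊤) (hU.mem_nhds hx₀)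
  have hr' : ∀ x, u x ∈ Set.Icc (0:ℝ) 1 := fun x => hr ⟨x, rfl⟩
  refine ⟨u, ⟨hsm, hcs, hsupp⟩, fun x => (hr' x).1, fun x => (hr' x).2, hux, ?_⟩
  by_contra! hcon
  have hzero : ∀ x, fderiv ℝ u x = 0 := by
    intro x
    by_cases hx : x ∈ U
    · exact hcon x hx
    · by_contra hne
      exact hx (hsupp (support_fderiv_subset ℝ hne))
  have hone : ∀ x, u x = 1 := fun x => by
    rw [← hux]
    exact is_const_of_fderiv_eq_zero (hsm.differentiable (by simp)) hzero x x₀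
  have huniv : tsupport u = Set.univ := by
    rw [Set.eq_univ_iff_forall]
    intro x
    exact subset_tsupport u (by simp [hone x])
  have hc : IsCompact (tsupport u) := hcs
  rw [huniv] at hc
  exact noncompact_univ _ hc

/-- A power growth bound on `f` makes its primitives locally bounded, uniformly in `x`. -/
lemma exists_bound_integral_of_growth {X : Type*} [MeasurableSpace X] {μ : Measure X}
    {f : X → ℝ → ℝ} {A B α β : ℝ} (hA : 0 ≤ A) (hB : 0 ≤ B) (hα : 0 ≤ α) (hβ : 0 ≤ β)
    (hf : ∀ᵐ x ∂μ, ∀ t, |f x t| ≤ A * |t| ^ α + B * |t| ^ β) {R : ℝ} (hR : 0 ≤ R) :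
    ∃ D, 0 ≤ D ∧ ∀ᵐ x ∂μ, ∀ s, 0 ≤ s → s ≤ R → |∫ τ in (0:ℝ)..s, f x τ| ≤ D := by
  refine ⟨(A * R ^ α + B * R ^ β) * R, by positivity, ?_⟩
  filter_upwards [hf] with x hx s hs0 hsR
  have hb : ∀ τ ∈ Set.uIoc 0 s, ‖f x τ‖ ≤ A * R ^ α + B * R ^ β := by
    intro τ hτ
    rw [Set.uIoc_of_le hs0] at hτ
    have hτR : |τ| ≤ R := by
      rw [abs_of_pos hτ.1]
      exact hτ.2.trans hsR
    refine (hx τ).trans ?_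
    gcongr
  refine (intervalIntegral.norm_integral_le_of_norm_le_const hb).trans ?_
  rw [sub_zero, abs_of_nonneg hs0]
  gcongr

/-- The Ambrosetti–Rabinowitz condition forces superlinear growth of the primitive. -/
lemma exists_rpow_le_integral_of_superlinear {X : Type*} [MeasurableSpace X] {μ : Measure X}
    {f : X → ℝ → ℝ} (hfc : ∀ᵐ x ∂μ, Continuous (f x)) {σ c T D : ℝ} (hσ : 0 < σ) (hc : 0 < c)
    (hT : 0 < T) (hD : 0 ≤ D)
    (hDf : ∀ᵐ x ∂μ, ∀ s, 0 ≤ s → s ≤ T → |∫ τ in (0:ℝ)..s, f x τ| ≤ D)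
    (hf : ∀ᵐ x ∂μ, ∀ t, T ≤ t →
      c ≤ σ * (∫ τ in (0:ℝ)..t, f x τ) ∧ σ * (∫ τ in (0:ℝ)..t, f x τ) ≤ t * f x t) :
    ∃ c₁ > 0, ∃ c₂ ≥ 0, ∀ᵐ x ∂μ, ∀ s, 0 ≤ s →
      c₁ * s ^ σ - c₂ ≤ ∫ τ in (0:ℝ)..s, f x τ := by
  have hTσ : 0 < T ^ σ := Real.rpow_pos_of_pos hT σ
  refine ⟨c / σ / T ^ σ, by positivity, D + c / σ, by positivity, ?_⟩
  filter_upwards [hfc, hDf, hf] with x hxc hxD hx s hs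
  have hcσ : 0 < c / σ := by positivity
  rcases le_total s T with hsT | hTs
  · have h1 : c / σ / T ^ σ * s ^ σ ≤ c / σ / T ^ σ * T ^ σ := by gcongr
    rw [div_mul_cancel₀ _ hTσ.ne'] at h1
    linarith [neg_le_of_abs_le (hxD s hs hsT)]
  · have h1 := integral_le_mul_rpow_of_mul_le (h := fun t => -f x t) (s := σ) hxc.neg hT
      (fun t ht => by
        rw [intervalIntegral.integral_neg]
        linarith [(hx t ht).2]) hTs
    simp only [intervalIntegral.integral_neg] at h1
    have h2 : c / σ ≤ ∫ τ in (0:ℝ)..T, f x τ := by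
      rw [div_le_iff₀ hσ]
      linarith [(hx T le_rfl).1]
    have h3 : c / σ * (s / T) ^ σ ≤ (∫ τ in (0:ℝ)..T, f x τ) * (s / T) ^ σ := by gcongr
    have h4 : c / σ / T ^ σ * s ^ σ = c / σ * (s / T) ^ σ := by
      rw [Real.div_rpow hs hT.le]
      ring
    linarith

/-- Lemma 4.2: under `(M₁)`, `(M₂)`, `(f₁)`, `(f₂)`, and `a` not a.e. zero on `Ω`,
there exists `e ∈ C_c^∞(Ω)` with `I(e) < 0`, `‖∇e‖_p ≥ 1` and `‖∇e‖_{q,a} ≥ 1`, where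
`I(u) = (1/p)𝓜(‖∇u‖_p^p) + (1/q)𝓜(‖∇u‖_{q,a}^q) − ∫_Ω F(x,u)dx`. -/
theorem stmt_15 {N : ℕ} (hN : 2 ≤ N) (Ω : Set (EuclideanSpace ℝ (Fin N)))
    (hΩo : IsOpen Ω) (hΩne : Ω.Nonempty) (hΩbd : Bornology.IsBounded Ω)
    (hΩlip : HasLipschitzBoundary Ω)
    (p q : ℝ) (hp : 1 < p) (hpq : p < q) (hqN : q < N) (hpqN : q / p < 1 + 1 / N)
    (a : EuclideanSpace ℝ (Fin N) → ℝ) (Ka : ℝ≥0)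
    (haLip : LipschitzOnWith Ka a (closure Ω)) (ha0 : ∀ x ∈ closure Ω, 0 ≤ a x)
    (hane : ¬ (a =ᵐ[volume.restrict Ω] 0))
    -- (M₁)
    (M : ℝ → ℝ) (hMc : ContinuousOn M (Set.Ici 0)) (hM0 : ∀ t, 0 ≤ t → 0 ≤ M t)
    (θ : ℝ) (hθ1 : 1 ≤ θ) (hθ2 : θ < (N * p / (N - p)) / q)
    (hM1 : ∀ t, 0 ≤ t → t * M t ≤ θ * ∫ τ in (0:ℝ)..t, M τ)
    -- (M₂)
    (hM2 : ∀ τ : ℝ, 0 < τ → ∃ κ > (0:ℝ), ∀ t, τ ≤ t → κ ≤ M t)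
    -- f Carathéodory
    (f : EuclideanSpace ℝ (Fin N) → ℝ → ℝ)
    (hfmeas : ∀ t : ℝ, Measurable fun x => f x t)
    (hfcont : ∀ᵐ x ∂(volume.restrict Ω), Continuous (f x))
    -- (f₁)
    (r : ℝ) (hr1 : q * θ < r) (hr2 : r < N * p / (N - p))
    (hf1 : ∀ ε > (0:ℝ), ∃ δ > (0:ℝ), ∀ᵐ x ∂(volume.restrict Ω), ∀ t : ℝ,
      |f x t| ≤ q * θ * ε * |t| ^ (q * θ - 1) + r * δ * |t| ^ (r - 1))
    -- (f₂)
    (σ c t₀ : ℝ) (hσ1 : q * θ < σ) (hσ2 : σ < N * p / (N - p)) (hcpos : 0 < c)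
    (ht₀ : 0 ≤ t₀)
    (hf2 : ∀ᵐ x ∂(volume.restrict Ω), ∀ t : ℝ, t₀ ≤ |t| →
      c ≤ σ * (∫ τ in (0:ℝ)..t, f x τ) ∧ σ * (∫ τ in (0:ℝ)..t, f x τ) ≤ t * f x t) :
    ∃ e : EuclideanSpace ℝ (Fin N) → ℝ, CcInfty Ω e ∧
      (1 / p) * (∫ τ in (0:ℝ)..(∫ x in Ω, ‖fderiv ℝ e x‖ ^ p), M τ)
        + (1 / q) * (∫ τ in (0:ℝ)..(∫ x in Ω, a x * ‖fderiv ℝ e x‖ ^ q), M τ)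
        - (∫ x in Ω, ∫ τ in (0:ℝ)..(e x), f x τ) < 0 ∧
      1 ≤ (∫ x in Ω, ‖fderiv ℝ e x‖ ^ p) ^ (1 / p) ∧
      1 ≤ (∫ x in Ω, a x * ‖fderiv ℝ e x‖ ^ q) ^ (1 / q) := by
  have hN0 : 0 < N := by omega
  have hp0 : 0 < p := by linarith
  have hq0 : 0 < q := by linarith
  have hqθ : q ≤ q * θ := le_mul_of_one_le_right hq0.le hθ1
  have hσ0 : 0 < σ := by linarith
  have hσ_gap : 0 < σ - q * θ := by linarith
  have : IsFiniteMeasure (volume.restrict Ω) := ⟨by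
    rw [Measure.restrict_apply_univ]
    exact hΩbd.measure_lt_top⟩
  have haC : ContinuousOn a (closure Ω) := haLip.continuousOn
  -- a test function supported where `a` is positive
  have hUo : IsOpen (Ω ∩ a ⁻¹' Set.Ioi 0) :=
    (haC.mono subset_closure).isOpen_inter_preimage hΩo isOpen_Ioi
  obtain ⟨x₀, hx₀⟩ : (Ω ∩ a ⁻¹' Set.Ioi 0).Nonempty := by
    by_contra hcon
    refine hane (ae_restrict_of_forall_mem hΩo.measurableSet fun x hx => ?_)
    refine le_antisymm (not_lt.1 fun hpos => hcon ⟨x, hx, hpos⟩) (ha0 x (subset_closure hx))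
  obtain ⟨u, ⟨husm, hucs, husupp⟩, hu0, hu1, hux₀, y, hyU, hy⟩ :=
    exists_ccInfty_fderiv_ne_zero hN0 hUo hx₀
  have hfd : Continuous fun x => ‖fderiv ℝ u x‖ :=
    (husm.continuous_fderiv (by simp)).norm
  have hfdy : 0 < ‖fderiv ℝ u y‖ := norm_pos_iff.2 hy
  have hcp : Continuous fun x => ‖fderiv ℝ u x‖ ^ p :=
    hfd.rpow_const fun _ => Or.inr hp0.le
  have hcq : Continuous fun x => ‖fderiv ℝ u x‖ ^ q :=
    hfd.rpow_const fun _ => Or.inr hq0.le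
  have hcσ : Continuous fun x => u x ^ σ :=
    husm.continuous.rpow_const fun _ => Or.inr hσ0.le
  have hA : 0 < ∫ x in Ω, ‖fderiv ℝ u x‖ ^ p :=
    setIntegral_pos_of_continuousOn hΩo hΩbd hcp.continuousOn (fun x _ => by positivity)
      hyU.1 (by positivity)
  have hB : 0 < ∫ x in Ω, a x * ‖fderiv ℝ u x‖ ^ q :=
    setIntegral_pos_of_continuousOn hΩo hΩbd (haC.mul hcq.continuousOn)
      (fun x hx => mul_nonneg (ha0 x hx) (by positivity)) hyU.1
      (mul_pos hyU.2 (by positivity))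
  have hS : 0 < ∫ x in Ω, u x ^ σ :=
    setIntegral_pos_of_continuousOn hΩo hΩbd hcσ.continuousOn
      (fun x _ => Real.rpow_nonneg (hu0 x) σ) hx₀.1 (by simp [hux₀])
  have hSint : Integrable (fun x => u x ^ σ) (volume.restrict Ω) :=
    (hcσ.continuousOn.integrableOn_compact hΩbd.isCompact_closure).mono_set subset_closure
  set A := ∫ x in Ω, ‖fderiv ℝ u x‖ ^ p with hAdef
  set B := ∫ x in Ω, a x * ‖fderiv ℝ u x‖ ^ q with hBdef
  set S := ∫ x in Ω, u x ^ σ with hSdef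
  -- growth of the primitive of `f`
  obtain ⟨δ, hδ, hfδ⟩ := hf1 1 one_pos
  have hbound : ∀ R : ℝ, 0 ≤ R → ∃ D, 0 ≤ D ∧ ∀ᵐ x ∂(volume.restrict Ω), ∀ s, 0 ≤ s → s ≤ R →
      |∫ τ in (0:ℝ)..s, f x τ| ≤ D := fun R hR =>
    exists_bound_integral_of_growth (A := q * θ * 1) (B := r * δ) (by nlinarith)
      (mul_nonneg (by linarith) hδ.le) (by linarith) (by linarith) hfδ hR
  have hT : 0 < max t₀ 1 := lt_max_of_lt_right one_pos
  obtain ⟨D, hD, hDf⟩ := hbound (max t₀ 1) hT.le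
  obtain ⟨c₁, hc₁, c₂, hc₂, hF⟩ := exists_rpow_le_integral_of_superlinear hfcont hσ0 hcpos hT hD
    hDf (by
      filter_upwards [hf2] with x hx t ht
      exact hx t (((le_max_left _ _).trans ht).trans (le_abs_self t)))
  have hFint : ∀ t : ℝ, 0 ≤ t → c₁ * (t ^ σ * S) - c₂ * (volume.restrict Ω).real Set.univ ≤
      ∫ x in Ω, ∫ τ in (0:ℝ)..(t * u x), f x τ := by
    intro t ht
    obtain ⟨E, -, hE⟩ := hbound t ht
    have hFi : Integrable (fun x => ∫ τ in (0:ℝ)..(t * u x), f x τ) (volume.restrict Ω) := by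
      refine Integrable.of_bound (C := E) (aestronglyMeasurable_integral_caratheodory hfmeas hfcont
        (husm.continuous.measurable.const_mul t)) ?_
      filter_upwards [hE] with x hx
      exact hx _ (mul_nonneg ht (hu0 x)) (mul_le_of_le_one_right ht (hu1 x))
    have hlow : Integrable (fun x => c₁ * (t ^ σ * u x ^ σ) - c₂) (volume.restrict Ω) :=
      ((hSint.const_mul _).const_mul _).sub (integrable_const _)
    calc c₁ * (t ^ σ * S) - c₂ * (volume.restrict Ω).real Set.univ
        = ∫ x in Ω, (c₁ * (t ^ σ * u x ^ σ) - c₂) := by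
          rw [integral_sub ((hSint.const_mul _).const_mul _) (integrable_const _),
            integral_const_mul, integral_const_mul, integral_const, smul_eq_mul, mul_comm c₂]
      _ ≤ _ := by
          refine integral_mono_ae hlow hFi ?_
          filter_upwards [hF] with x hx
          have := hx (t * u x) (mul_nonneg ht (hu0 x))
          rwa [Real.mul_rpow ht (hu0 x)] at this
  -- growth of the primitive of `M`
  set G := ∫ τ in (0:ℝ)..1, M τ with hGdef
  have hG : 0 ≤ G := intervalIntegral.integral_nonneg zero_le_one fun τ hτ => hM0 τ hτ.1
  have hMgrow : ∀ {t}, 1 ≤ t → ∫ τ in (0:ℝ)..t, M τ ≤ G * t ^ θ := fun ht =>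
    integral_le_mul_rpow_of_continuousOn hMc hM1 ht
  set V := (volume.restrict Ω).real Set.univ with hVdef
  have hV : 0 ≤ V := measureReal_nonneg
  set K := 1 / p * (G * A ^ θ) + 1 / q * (G * B ^ θ) + c₂ * V with hKdef
  -- choice of the scaling parameter
  obtain ⟨t, ht1, htp, htq, htσ⟩ : ∃ t : ℝ, 1 ≤ t ∧ 1 / A ≤ t ^ p ∧ 1 / B ≤ t ^ q ∧
      K / (c₁ * S) < t ^ (σ - q * θ) :=
    ((Filter.eventually_ge_atTop (1:ℝ)).and
      (((tendsto_rpow_atTop hp0).eventually_ge_atTop _).and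
      (((tendsto_rpow_atTop hq0).eventually_ge_atTop _).and
      ((tendsto_rpow_atTop hσ_gap).eventually_gt_atTop _)))).exists
  have ht0 : 0 < t := by linarith
  have hfde : ∀ x, ‖fderiv ℝ (fun x => t * u x) x‖ = t * ‖fderiv ℝ u x‖ := fun x => by
    rw [fderiv_const_mul (husm.differentiable (by simp) x), norm_smul, Real.norm_of_nonneg ht0.le]
  have hAe : ∫ x in Ω, ‖fderiv ℝ (fun x => t * u x) x‖ ^ p = t ^ p * A := by
    simp only [hfde, Real.mul_rpow ht0.le (norm_nonneg _)]
    rw [integral_const_mul]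
  have hBe : ∫ x in Ω, a x * ‖fderiv ℝ (fun x => t * u x) x‖ ^ q = t ^ q * B := by
    simp only [hfde, Real.mul_rpow ht0.le (norm_nonneg _), mul_left_comm (a _)]
    rw [integral_const_mul]
  have hA1 : 1 ≤ t ^ p * A := (div_le_iff₀ hA).1 htp
  have hB1 : 1 ≤ t ^ q * B := (div_le_iff₀ hB).1 htq
  refine ⟨fun x => t * u x, ⟨contDiff_const.mul husm, hucs.mul_left, ?_⟩, ?_, ?_, ?_⟩
  · exact (tsupport_mul_subset_right.trans husupp).trans Set.inter_subset_left
  · rw [hAe, hBe]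
    have h1 : ∫ τ in (0:ℝ)..(t ^ p * A), M τ ≤ t ^ (q * θ) * (G * A ^ θ) := by
      refine (hMgrow hA1).trans ?_
      rw [Real.mul_rpow (by positivity) hA.le, ← Real.rpow_mul ht0.le]
      have : t ^ (p * θ) ≤ t ^ (q * θ) := by gcongr
      calc G * (t ^ (p * θ) * A ^ θ) ≤ G * (t ^ (q * θ) * A ^ θ) := by gcongr
        _ = _ := by ring
    have h2 : ∫ τ in (0:ℝ)..(t ^ q * B), M τ ≤ t ^ (q * θ) * (G * B ^ θ) := by
      refine (hMgrow hB1).trans_eq ?_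
      rw [Real.mul_rpow (by positivity) hB.le, ← Real.rpow_mul ht0.le]
      ring
    have h3 : c₂ * V ≤ t ^ (q * θ) * (c₂ * V) :=
      le_mul_of_one_le_left (by positivity) (Real.one_le_rpow ht1 (by linarith))
    have h4 : t ^ (q * θ) * K < c₁ * (t ^ σ * S) := by
      have hK : K < t ^ (σ - q * θ) * (c₁ * S) := (div_lt_iff₀ (by positivity)).1 htσ
      have hsplit : t ^ σ = t ^ (q * θ) * t ^ (σ - q * θ) := by
        rw [← Real.rpow_add ht0]
        congr 1
        ring
      calc t ^ (q * θ) * K < t ^ (q * θ) * (t ^ (σ - q * θ) * (c₁ * S)) := by gcongr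
        _ = _ := by
          rw [hsplit]
          ring
    have h5 := hFint t ht0.le
    have h1' := mul_le_mul_of_nonneg_left h1 (by positivity : 0 ≤ 1 / p)
    have h2' := mul_le_mul_of_nonneg_left h2 (by positivity : 0 ≤ 1 / q)
    rw [hKdef] at h4
    linarith
  · rw [hAe]
    exact Real.one_le_rpow hA1 (by positivity)
  · rw [hBe]
    exact Real.one_le_rpow hB1 (by positivity)
end
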